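/- Let M ≥ 0 and u ∈ D_M. Then for every p ∈ V_M, the sequence (H_m u(p))_{m ≥ M} is Cauchy, so the limit lim_{m→∞} H_m u(p) exists; hence the Neumann derivative (du)(p) = lim_{m→∞} (−H_m u(p)) is well-defined. -/

import Mathlib

open Filter Topology MeasureTheory Finset Classical

noncomputable section

/-- The one-sided full shift space `Σ_N^+` on `N` symbols; coordinates are indexed
from `0`, so the paper's `x_1 x_2 ⋯` is `x 0, x 1, ⋯` here. It carries the product
of the discrete topology on `Fin N`. -/
abbrev SSp (N : ℕ) : Type := ℕ → Fin N

/-- The level-`m` vertex set `V_m = {p : p_i = p_{i+1} for all i ≥ m+1}` (1-based),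
i.e. the sequences that are constant from (0-based) coordinate `m` on.  It is
realized as a `Finset` via the parametrization by the first `m+1` coordinates;
see `mem_V` for the defining property. -/
noncomputable def V (N m : ℕ) : Finset (SSp N) :=
  (Finset.univ : Finset (Fin (m + 1) → Fin N)).image
    (fun w j => w ⟨min j m, by omega⟩)

lemma const_from (N m : ℕ) (p : SSp N) (h : ∀ i, m ≤ i → p i = p (i + 1)) :
    ∀ j, m ≤ j → p j = p m := by
  intro j hj
  induction j with
  | zero => have : m = 0 := by omega
            simp [this]
  | succ k ih =>
      rcases Nat.lt_or_ge k m with hk | hk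
      · have : m = k + 1 := by omega
        simp [this]
      · rw [← h k hk]
        exact ih hk

/-- Membership in `V N m` is exactly the paper's condition
`p_i = p_{i+1}` for all `i ≥ m+1` (1-based), i.e. `p i = p (i+1)` for all `i ≥ m`. -/
lemma mem_V {N m : ℕ} {p : SSp N} :
    p ∈ V N m ↔ ∀ i, m ≤ i → p i = p (i + 1) := by
  classical
  constructor
  · intro hp i hi
    simp only [V, Finset.mem_image] at hp
    obtain ⟨w, -, rfl⟩ := hp
    have h1 : min i m = m := by omega
    have h2 : min (i + 1) m = m := by omega
    simp [h1, h2]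
  · intro h
    simp only [V, Finset.mem_image]
    refine ⟨fun j => p j, Finset.mem_univ _, ?_⟩
    funext j
    rcases Nat.lt_or_ge j m with hj | hj
    · have : min j m = j := by omega
      simp [this]
    · have : min j m = m := by omega
      simp only [this]
      exact (const_from N m p h j hj).symm

/-- The deleted neighbourhood `U_{p,m} = {q ∈ V_m : q ≠ p, q_i = p_i for 1 ≤ i ≤ m}`
(1-based), i.e. `q` agrees with `p` on the first `m` (0-based: `i < m`) coordinates. -/
noncomputable def U (N m : ℕ) (p : SSp N) : Finset (SSp N) :=
  (V N m).filter (fun q => q ≠ p ∧ ∀ i, i < m → q i = p i)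

/-- `κ_p = min {j : p ∈ V_j}`. -/
noncomputable def kappa (N : ℕ) (p : SSp N) : ℕ := sInf {j | p ∈ V N j}

/-- The difference operator
`H_m u (p) = Σ_{i = κ_p}^{m} Σ_{q ∈ U_{p,i}} (u(q) − u(p))`. -/
noncomputable def H (N m : ℕ) (u : SSp N → ℝ) (p : SSp N) : ℝ :=
  ∑ i ∈ Finset.Icc (kappa N p) m, ∑ q ∈ U N i p, (u q - u p)

/-- The Dirichlet form `E_{H_m}(u, v) = − Σ_{p ∈ V_m} u(p) · H_m v(p)`. -/
noncomputable def EH (N m : ℕ) (u v : SSp N → ℝ) : ℝ :=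
  -∑ p ∈ V N m, u p * H N m v p

/-- The cylinder set `[p_1 ⋯ p_m]`, determined by the first `m` coordinates of `p`. -/
def cyl (N m : ℕ) (p : SSp N) : Set (SSp N) := {x | ∀ i, i < m → x i = p i}

/-- `χ_p^m` : the indicator function of the cylinder set `[p_1 ⋯ p_{m+1}]`. -/
noncomputable def chi (N m : ℕ) (p : SSp N) : SSp N → ℝ :=
  (cyl N (m + 1) p).indicator 1

/-- `u ∈ dom E`: `u` is continuous and the energy
`E(u) = lim_m E_{H_m}(u|_{V_m})` exists (and is finite). -/
def MemDomE (N : ℕ) (u : SSp N → ℝ) : Prop :=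
  Continuous u ∧ ∃ L : ℝ, Tendsto (fun m => EH N m u u) atTop (nhds L)

/-- `v ∈ dom_M E`: `v` has finite energy and vanishes on the boundary `V_M`. -/
def MemDomME (N M : ℕ) (v : SSp N → ℝ) : Prop :=
  MemDomE N v ∧ ∀ p ∈ V N M, v p = 0

/-- `u ∈ 𝒟_M` with `Δ u = f` (strong formulation with boundary `V_M`):
`u` and `f` are continuous and
`lim_{m → ∞} max_{p ∈ V_m ∖ V_M} |N^{m+1} H_m u(p) − f(p)| = 0`. -/
def IsLaplacianOn (N M : ℕ) (u f : SSp N → ℝ) : Prop :=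
  Continuous u ∧ Continuous f ∧
    ∀ ε : ℝ, 0 < ε → ∃ m₀ : ℕ, ∀ m, m₀ ≤ m → ∀ p ∈ V N m, p ∉ V N M →
      |(N : ℝ) ^ (m + 1) * H N m u p - f p| < ε

/-- `u ∈ D_μ` with `Δ u = f` (original definition of the Laplacian):
`u` and `f` are continuous and
`lim_{m → ∞} max_{p ∈ V_m ∖ V_{m−1}} |N^{m+1} H_m u(p) − f(p)| = 0`
(the level is written `m+1` to avoid natural subtraction). -/
def IsLaplacianDmu (N : ℕ) (u f : SSp N → ℝ) : Prop :=
  Continuous u ∧ Continuous f ∧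
    ∀ ε : ℝ, 0 < ε → ∃ m₀ : ℕ, ∀ m, m₀ ≤ m → ∀ p ∈ V N (m + 1), p ∉ V N m →
      |(N : ℝ) ^ (m + 2) * H N (m + 1) u p - f p| < ε

/-- `μ` is the equidistributed Bernoulli measure:
`μ([p_1 ⋯ p_m]) = N^{−m}` for every cylinder set. -/
def IsBernoulli (N : ℕ) (μ : Measure (SSp N)) : Prop :=
  ∀ (m : ℕ) (p : SSp N), μ (cyl N m p) = (N : ENNReal)⁻¹ ^ m

/-- `ρ(x,y) = min {i : x_i ≠ y_i}` (1-based; `0`-based first disagreement plus one). -/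
noncomputable def rho (N : ℕ) (x y : SSp N) : ℕ := sInf {i | x i ≠ y i} + 1

/-- The matrix `(G_m)_{pq}`: `2/N` if `q = p`, `1/N` if `q ∈ U_{p,m}`, `0` otherwise. -/
noncomputable def Gmat (N m : ℕ) (p q : SSp N) : ℝ :=
  if q = p then 2 / N else if q ∈ U N m p then 1 / N else 0

/-- The Green's function
`g(x,y) = Σ_{m=1}^{ρ(x,y)−1} Σ_{r,s ∈ V_m ∖ V_{m−1}} (G_m)_{rs} χ_r^m(x) χ_s^m(y)`
for `ρ(x,y) > 1`, and `g(x,y) = 0` for `ρ(x,y) = 1` (the sum is then empty). -/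
noncomputable def greenFn (N : ℕ) (x y : SSp N) : ℝ :=
  ∑ m ∈ Finset.Icc 1 (rho N x y - 1),
    ∑ r ∈ (V N m).filter (fun r => r ∉ V N (m - 1)),
      ∑ s ∈ (V N m).filter (fun s => s ∉ V N (m - 1)),
        Gmat N m r s * chi N m r x * chi N m s y

/-- The Green's operator `G_μ f (x) = ∫_{Σ_N^+ ∖ {x}} g(x,y) f(y) dμ(y)`. -/
noncomputable def Gop (N : ℕ) (μ : Measure (SSp N)) (f : SSp N → ℝ) (x : SSp N) : ℝ :=
  ∫ y in ({x}ᶜ : Set (SSp N)), greenFn N x y * f y ∂μ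

/-!
Moving from level `m` to level `m + 1` changes `H_m u p` by `∑ (u q - u p)` over the level-`(m + 1)`
neighbours `q` of `p`. Together with `p` these `q` form a complete graph, on which the graph
Laplacian sums to zero, and each `q` is new at level `m + 1`, so that `H_{m+1} u q` has only one
term, the Laplacian of that complete graph. The increment is therefore `-∑ H_{m+1} u q`, a sum of
at most `N` terms. Since `N^{m+2} H_{m+1} u q` is uniformly close to the bounded function `Δu`,
each term is `O(N^{-m})`, and the increments are summable.
-/

lemma sum_sum_sub_eq_zero {ι G : Type*} [AddCommGroup G] (s : Finset ι) (g : ι → G) :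
    ∑ i ∈ s, ∑ j ∈ s, (g j - g i) = 0 := by
  simp only [sum_sub_distrib]
  rw [sum_comm, sub_self]

lemma V_mono (N : ℕ) : Monotone (V N) :=
  fun _ _ hmn _ hp => mem_V.2 fun i hi => mem_V.1 hp i (hmn.trans hi)

lemma eq_of_mem_V_of_mem_cyl {N m : ℕ} {p q : SSp N} (hp : p ∈ V N m) (hq : q ∈ V N m)
    (hqp : q ∈ cyl N (m + 1) p) : q = p := by
  funext i
  rcases le_total i m with hi | hi
  · exact hqp i (Nat.lt_succ_of_le hi)
  · rw [const_from N m p (mem_V.1 hp) i hi, const_from N m q (mem_V.1 hq) i hi,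
      hqp m m.lt_succ_self]

lemma mem_U {N m : ℕ} {p q : SSp N} :
    q ∈ U N m p ↔ q ∈ V N m ∧ q ≠ p ∧ q ∈ cyl N m p :=
  mem_filter

lemma notMem_V_of_mem_U_succ {N m : ℕ} {p q : SSp N} (hp : p ∈ V N m)
    (hq : q ∈ U N (m + 1) p) : q ∉ V N m :=
  fun hqV => (mem_U.1 hq).2.1 (eq_of_mem_V_of_mem_cyl hp hqV (mem_U.1 hq).2.2)

lemma card_U_le (N m : ℕ) (p : SSp N) : #(U N m p) ≤ N := by
  have injOn_apply : Set.InjOn (fun q : SSp N => q m) (U N m p) := by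
    intro q hq r hr hqr
    obtain ⟨hqV, -, hqp⟩ := mem_U.1 hq
    obtain ⟨hrV, -, hrp⟩ := mem_U.1 hr
    refine eq_of_mem_V_of_mem_cyl hrV hqV fun i hi => ?_
    rcases Nat.lt_succ_iff_lt_or_eq.1 hi with hi | rfl
    · rw [hqp i hi, hrp i hi]
    · exact hqr
  calc #(U N m p) ≤ #(univ : Finset (Fin N)) :=
        card_le_card_of_injOn _ (fun _ _ => mem_coe.2 (mem_univ _)) injOn_apply
    _ = N := card_fin N

/-- The cell of `p` at level `m`: the vertices of `V_m` in the cylinder `[p_1 ⋯ p_m]`. When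
`p ∈ V_m` it is `U_{p,m}` together with `p`, and it is the same for all of its members, so the
relation `q ∈ U_{p,m}` makes it a complete graph. -/
def cell (N m : ℕ) (p : SSp N) : Finset (SSp N) :=
  (V N m).filter (· ∈ cyl N m p)

lemma mem_cell {N m : ℕ} {p q : SSp N} : q ∈ cell N m p ↔ q ∈ V N m ∧ q ∈ cyl N m p :=
  mem_filter

lemma self_mem_cell {N m : ℕ} {p : SSp N} (hp : p ∈ V N m) : p ∈ cell N m p :=
  mem_cell.2 ⟨hp, fun _ _ => rfl⟩

lemma cell_eq_of_mem {N m : ℕ} {p q : SSp N} (hq : q ∈ cell N m p) :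
    cell N m q = cell N m p :=
  filter_congr fun _ _ => forall₂_congr fun i hi => by rw [(mem_cell.1 hq).2 i hi]

lemma U_eq_erase_cell (N m : ℕ) (p : SSp N) : U N m p = (cell N m p).erase p := by
  ext q
  simp only [mem_U, mem_erase, mem_cell]
  tauto

lemma sum_U_sub_eq_sum_cell_sub (N m : ℕ) (u : SSp N → ℝ) (p : SSp N) :
    ∑ q ∈ U N m p, (u q - u p) = ∑ q ∈ cell N m p, (u q - u p) := by
  rw [U_eq_erase_cell]
  exact sum_erase _ (sub_self _)

lemma sum_cell_sum_U_sub_eq_zero (N m : ℕ) (u : SSp N → ℝ) (p : SSp N) :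
    ∑ q ∈ cell N m p, ∑ r ∈ U N m q, (u r - u q) = 0 := by
  rw [← sum_sum_sub_eq_zero (cell N m p) u]
  exact sum_congr rfl fun q hq => by rw [sum_U_sub_eq_sum_cell_sub, cell_eq_of_mem hq]

lemma kappa_le {N m : ℕ} {p : SSp N} (hp : p ∈ V N m) : kappa N p ≤ m :=
  Nat.sInf_le hp

lemma kappa_eq_succ_iff {N m : ℕ} {p : SSp N} :
    kappa N p = m + 1 ↔ p ∈ V N (m + 1) ∧ p ∉ V N m :=
  Nat.sInf_upward_closed_eq_succ_iff (fun _ _ hij hp => V_mono N hij hp) m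

lemma H_succ_of_notMem {N m : ℕ} (u : SSp N → ℝ) {p : SSp N} (hp : p ∈ V N (m + 1))
    (hpm : p ∉ V N m) : H N (m + 1) u p = ∑ q ∈ U N (m + 1) p, (u q - u p) := by
  rw [H, kappa_eq_succ_iff.2 ⟨hp, hpm⟩, Icc_self, sum_singleton]

lemma H_succ {N m : ℕ} (u : SSp N → ℝ) {p : SSp N} (hp : p ∈ V N m) :
    H N (m + 1) u p = H N m u p + ∑ q ∈ U N (m + 1) p, (u q - u p) :=
  sum_Icc_succ_top ((kappa_le hp).trans m.le_succ) _

lemma H_succ_sub_H {N m : ℕ} (u : SSp N → ℝ) {p : SSp N} (hp : p ∈ V N m) :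
    H N (m + 1) u p - H N m u p = -∑ q ∈ U N (m + 1) p, H N (m + 1) u q := by
  have H_neighbour : ∀ q ∈ U N (m + 1) p,
      H N (m + 1) u q = ∑ r ∈ U N (m + 1) q, (u r - u q) := fun q hq =>
    H_succ_of_notMem u (mem_U.1 hq).1 (notMem_V_of_mem_U_succ hp hq)
  have sum_over_cell : ∑ q ∈ U N (m + 1) p, (u q - u p) +
      ∑ q ∈ U N (m + 1) p, ∑ r ∈ U N (m + 1) q, (u r - u q) = 0 := by
    rw [← sum_cell_sum_U_sub_eq_zero N (m + 1) u p,
      ← add_sum_erase _ _ (self_mem_cell (V_mono N m.le_succ hp)), ← U_eq_erase_cell]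
  rw [H_succ u hp, add_sub_cancel_left, sum_congr rfl H_neighbour]
  exact eq_neg_of_add_eq_zero_left sum_over_cell

lemma dist_H_succ_le {N m : ℕ} {u : SSp N → ℝ} {p : SSp N} {b : ℝ} (hp : p ∈ V N m)
    (hb₀ : 0 ≤ b) (hb : ∀ q ∈ V N (m + 1), q ∉ V N m → |H N (m + 1) u q| ≤ b) :
    dist (H N m u p) (H N (m + 1) u p) ≤ N * b := by
  rw [dist_comm, Real.dist_eq, H_succ_sub_H u hp, abs_neg]
  calc |∑ q ∈ U N (m + 1) p, H N (m + 1) u q|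
      ≤ ∑ q ∈ U N (m + 1) p, |H N (m + 1) u q| := abs_sum_le_sum_abs _ _
    _ ≤ #(U N (m + 1) p) • b := sum_le_card_nsmul _ _ _ fun q hq =>
        hb q (mem_U.1 hq).1 (notMem_V_of_mem_U_succ hp hq)
    _ ≤ N * b := by
        rw [nsmul_eq_mul]
        gcongr
        exact card_U_le N (m + 1) p

lemma cauchySeq_H {N n : ℕ} {u : SSp N → ℝ} {b : ℕ → ℝ} (hb : Summable b)
    (hH : ∀ᶠ m in atTop, ∀ q ∈ V N (m + 1), q ∉ V N m → |H N (m + 1) u q| ≤ b m)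
    {p : SSp N} (hp : p ∈ V N n) : CauchySeq (fun m => H N m u p) := by
  refine cauchySeq_of_summable_dist
    (Summable.of_norm_bounded_eventually_nat (hb.abs.mul_left (N : ℝ)) ?_)
  filter_upwards [hH, eventually_ge_atTop n] with m hHm hnm
  rw [Real.norm_of_nonneg dist_nonneg]
  exact dist_H_succ_le (V_mono N hnm hp) (abs_nonneg _)
    fun q hq hqm => (hHm q hq hqm).trans (le_abs_self _)

lemma IsLaplacianOn.isLaplacianDmu {N M : ℕ} {u f : SSp N → ℝ} (h : IsLaplacianOn N M u f) :
    IsLaplacianDmu N u f := by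
  obtain ⟨hu, hf, hlim⟩ := h
  refine ⟨hu, hf, fun ε hε => ?_⟩
  obtain ⟨m₀, hm₀⟩ := hlim ε hε
  exact ⟨max m₀ M, fun m hm q hq hqm => hm₀ (m + 1) (by omega) q hq
    fun hqM => hqm (V_mono N ((le_max_right _ _).trans hm) hqM)⟩

lemma IsLaplacianDmu.exists_summable_bound {N : ℕ} (hN : 2 ≤ N) {u f : SSp N → ℝ}
    (h : IsLaplacianDmu N u f) : ∃ b : ℕ → ℝ, Summable b ∧
      ∀ᶠ m in atTop, ∀ q ∈ V N (m + 1), q ∉ V N m → |H N (m + 1) u q| ≤ b m := by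
  obtain ⟨-, hf, hlim⟩ := h
  obtain ⟨C, hC⟩ := isCompact_univ.exists_bound_of_continuousOn hf.continuousOn
  obtain ⟨m₀, hm₀⟩ := hlim 1 one_pos
  have hN1 : (1 : ℝ) < N := by exact_mod_cast hN
  have hpow (m : ℕ) : (0 : ℝ) < (N : ℝ) ^ (m + 2) := by positivity
  have summable_inv_pow : Summable fun m : ℕ => ((N : ℝ) ^ (m + 2))⁻¹ := by
    simpa only [inv_pow] using (summable_nat_add_iff 2).2
      (summable_geometric_of_lt_one (by positivity) (inv_lt_one_of_one_lt₀ hN1))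
  refine ⟨fun m => (1 + C) * ((N : ℝ) ^ (m + 2))⁻¹, summable_inv_pow.mul_left (1 + C), ?_⟩
  filter_upwards [eventually_ge_atTop m₀] with m hm q hq hqm
  have abs_rescaled_le : |(N : ℝ) ^ (m + 2) * H N (m + 1) u q| ≤ 1 + C :=
    calc |(N : ℝ) ^ (m + 2) * H N (m + 1) u q|
        ≤ |(N : ℝ) ^ (m + 2) * H N (m + 1) u q - f q| + |f q| := by
          simpa only [sub_add_cancel] using
            abs_add_le ((N : ℝ) ^ (m + 2) * H N (m + 1) u q - f q) (f q)
      _ ≤ 1 + C := add_le_add (hm₀ m hm q hq hqm).le (hC q (Set.mem_univ q))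
  rw [← div_eq_mul_inv, le_div_iff₀' (hpow m)]
  simpa only [abs_mul, abs_of_pos (hpow m)] using abs_rescaled_le

theorem statement11_general {N n : ℕ} {u : SSp N → ℝ} {b : ℕ → ℝ} (hb : Summable b)
    (hH : ∀ᶠ m in atTop, ∀ q ∈ V N (m + 1), q ∉ V N m → |H N (m + 1) u q| ≤ b m) :
    ∀ p ∈ V N n, CauchySeq (fun m => H N m u p) ∧
      ∃ L : ℝ, Tendsto (fun m => -(H N m u p)) atTop (nhds L) := by
  intro p hp
  have hcauchy := cauchySeq_H hb hH hp
  obtain ⟨L, hL⟩ := cauchySeq_tendsto_of_complete hcauchy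
  exact ⟨hcauchy, -L, hL.neg⟩

/-- for `u ∈ 𝒟_M` and every `p ∈ V_M`, the sequence
`(H_m u(p))_m` is Cauchy, hence `lim_m H_m u(p)` exists, so the Neumann derivative
`(du)(p) = lim_m (−H_m u (p))` is well-defined. -/
theorem statement11 (N : ℕ) (hN : 2 ≤ N) (M : ℕ) (u : SSp N → ℝ)
    (hu : ∃ f : SSp N → ℝ, IsLaplacianOn N M u f) :
    ∀ p ∈ V N M, CauchySeq (fun m => H N m u p) ∧
      ∃ L : ℝ, Tendsto (fun m => -(H N m u p)) atTop (nhds L) := by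
  obtain ⟨f, hf⟩ := hu
  obtain ⟨b, hb, hH⟩ := hf.isLaplacianDmu.exists_summable_bound hN
  exact statement11_general hb hH
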